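/- Let d ≥ 2 and let μ = (μ_n), σ = (σ_n) be sequences of positive integers satisfying Condition (C1) and Condition (C3). Then there exists ε₀ > 0 depending only on d, μ, σ such that for any λ₀ ∈ ℕ* and any renormalization scheme ℛ of dimension d associated to (λ₀,μ,σ) that satisfies Condition (C2) and Condition (C4) for ε₀, one has sup_{u∈𝕃_n} P((𝒜^{(n)}_u)^c) < 2^{−2^n} for every n ∈ ℕ. -/

import Mathlib

open MeasureTheory ProbabilityTheory Set

noncomputable section

/-- The scale sequence `λ_0 = lam0`, `λ_{n+1} = λ_n μ_n`. -/
def lamSeq (lam0 : ℕ) (μ : ℕ → ℕ) : ℕ → ℕ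
  | 0 => lam0
  | n + 1 => lamSeq lam0 μ n * μ n

/-- The lattice `𝕃 = L ℤ^d` inside `ℤ^d`. -/
def latt (d L : ℕ) : Set (Fin d → ℤ) := {u | ∀ i, (L : ℤ) ∣ u i}

/-- Sup norm on `ℤ^d`. -/
def normInfV {d : ℕ} (v : Fin d → ℤ) : ℕ := Finset.univ.sup fun i => (v i).natAbs

/-- ℓ¹ norm on `ℤ^d`. -/
def norm1V {d : ℕ} (v : Fin d → ℤ) : ℕ := ∑ i, (v i).natAbs

/-- `Λ_n(u) = (u + [0, λ_n)^d) ∩ 𝕃_{n-1}`. -/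
def lamBox {d : ℕ} (lam0 : ℕ) (μ : ℕ → ℕ) (n : ℕ) (u : Fin d → ℤ) : Set (Fin d → ℤ) :=
  {v | v ∈ latt d (lamSeq lam0 μ (n - 1)) ∧
    ∀ i, u i ≤ v i ∧ v i < u i + (lamSeq lam0 μ n : ℤ)}

/-- A renormalization scheme: a collection of seed events (indexed by `𝕃₀`)
and of auxiliary events (indexed by `𝕃_n`, `n ≥ 1`). -/
structure RenormScheme (Ω : Type*) (d : ℕ) where
  seed : (Fin d → ℤ) → Set Ω
  aux : ℕ → (Fin d → ℤ) → Set Ω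

/-- The recursively defined events `𝒜^{(n)}_u` of a renormalization scheme. -/
def Aev {Ω : Type*} {d : ℕ} (lam0 : ℕ) (μ σ : ℕ → ℕ) (S : RenormScheme Ω d) :
    ℕ → (Fin d → ℤ) → Set Ω
  | 0, u => S.seed u
  | n + 1, u =>
    S.aux (n + 1) u ∩
      ⋂ (u₁ : Fin d → ℤ) (u₂ : Fin d → ℤ) (_ : u₁ ∈ lamBox lam0 μ (n + 1) u)
        (_ : u₂ ∈ lamBox lam0 μ (n + 1) u)
        (_ : 5 * σ n * lamSeq lam0 μ n ≤ normInfV (u₁ - u₂)),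
        (Aev lam0 μ σ S n u₁ ∪ Aev lam0 μ σ S n u₂)

/-- Condition (C1): `μ_n ≥ 100 σ_n` and `σ_n ≥ 2`. -/
def Cond1 (μ σ : ℕ → ℕ) : Prop := ∀ n, 100 * σ n ≤ μ n ∧ 2 ≤ σ n

/-- The unique point `w ∈ Lℤ^d` with `v ∈ w + [0, L)^d`. -/
def parentV {d : ℕ} (L : ℕ) (v : Fin d → ℤ) : Fin d → ℤ :=
  fun i => (L : ℤ) * (Int.ediv (v i) (L : ℤ))

/-- The renormalization sequence of `u ∈ 𝕃_m`: `renSeq lam0 μ m u j ∈ 𝕃_{m+j}`. -/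
def renSeq {d : ℕ} (lam0 : ℕ) (μ : ℕ → ℕ) (m : ℕ) (u : Fin d → ℤ) : ℕ → (Fin d → ℤ)
  | 0 => u
  | j + 1 => parentV (lamSeq lam0 μ (m + j + 1)) (renSeq lam0 μ m u j)

/-- The event that `u ∈ 𝕃_m` is good up to scale `n`. -/
def GoodUpTo {Ω : Type*} {d : ℕ} (lam0 : ℕ) (μ σ : ℕ → ℕ) (S : RenormScheme Ω d)
    (m n : ℕ) (u : Fin d → ℤ) : Set Ω :=
  ⋂ k ∈ Finset.Icc m n, Aev lam0 μ σ S k (renSeq lam0 μ m u (k - m))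

/-- The box `u + [-r, r]^d ⊆ ℝ^d` (formal support of seed and auxiliary events). -/
def suppBox {d : ℕ} (u : Fin d → ℤ) (r : ℕ) : Set (Fin d → ℝ) :=
  {x | ∀ i, |x i - (u i : ℝ)| ≤ (r : ℝ)}

/-- The sub-collection of seed and auxiliary events whose formal support is contained
in `D`. -/
def schemeEventsIn {Ω : Type*} {d : ℕ} (lam0 : ℕ) (μ σ : ℕ → ℕ) (S : RenormScheme Ω d)
    (D : Set (Fin d → ℝ)) : Set (Set Ω) :=
  {E | (∃ u ∈ latt d (lamSeq lam0 μ 0), E = S.seed u ∧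
          suppBox u (σ 0 * lamSeq lam0 μ 0) ⊆ D) ∨
       (∃ n : ℕ, 1 ≤ n ∧ ∃ u ∈ latt d (lamSeq lam0 μ n), E = S.aux n u ∧
          suppBox u (σ n * lamSeq lam0 μ n) ⊆ D)}

/-- Condition (C2): collections of seed/auxiliary events with disjoint formal supports
are independent. -/
def Cond2 {Ω : Type*} [MeasureSpace Ω] {d : ℕ} (lam0 : ℕ) (μ σ : ℕ → ℕ)
    (S : RenormScheme Ω d) : Prop :=
  ∀ D₁ D₂ : Set (Fin d → ℝ), Disjoint D₁ D₂ →
    ProbabilityTheory.Indep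
      (MeasurableSpace.generateFrom (schemeEventsIn lam0 μ σ S D₁))
      (MeasurableSpace.generateFrom (schemeEventsIn lam0 μ σ S D₂)) ℙ

/-! The failure probabilities `pₙ = sup ℙ((𝒜⁽ⁿ⁾ᵤ)ᶜ)` satisfy `pₙ₊₁ ≤ qₙ₊₁ + μₙ^(2d) pₙ²`, where `qₙ`
is the largest failure probability of an auxiliary event at scale `n`. Indeed, if `𝒜⁽ⁿ⁺¹⁾ᵤ` fails,
then either its auxiliary event fails, or one of the at most `μₙ^(2d)` pairs of distant points of
`Λₙ₊₁(u)` consists of two bad points, and the two corresponding events have disjoint supports, hence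
are independent. Writing `pₙ = 2^(-2ⁿ xₙ)`, squaring preserves `xₙ` while the factor `2 μₙ^(2d)`
lowers it by `(1 + 2d log₂ μₙ) / 2ⁿ⁺¹`. By (C3) the total loss is finite, so `xₙ` stays above `1` as
soon as `x₀` exceeds `1` by at least this loss. -/

section Geometry

variable {d lam0 n : ℕ} {μ σ : ℕ → ℕ} {u v : Fin d → ℤ}

/-- Nesting of the formal supports across scales, divided by `λ_n`: as `lamBox lam0 μ (n + 1) u`
lies within sup-distance `λ_n μ_n` of `u`, the support `u + [-σ_{n+1} λ_{n+1}, σ_{n+1} λ_{n+1}]^d`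
contains the supports, of radius `σ_n λ_n`, attached to the points of this box. -/
def NestedSupports (μ σ : ℕ → ℕ) : Prop :=
  ∀ n, 0 < σ n ∧ σ n + μ n ≤ σ (n + 1) * μ n

theorem Cond1.nestedSupports (h : Cond1 μ σ) : NestedSupports μ σ := by
  intro n
  obtain ⟨hμ, hσ⟩ := h n
  have hσ' : 2 * μ n ≤ σ (n + 1) * μ n := Nat.mul_le_mul_right _ (h (n + 1)).2
  omega

theorem NestedSupports.pos (h : NestedSupports μ σ) (n : ℕ) : 0 < μ n := by
  obtain ⟨hσ, hle⟩ := h n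
  refine Nat.pos_of_ne_zero fun hμ => ?_
  rw [hμ, mul_zero] at hle
  omega

theorem lamSeq_pos (h0 : 0 < lam0) (hμ : ∀ n, 0 < μ n) (n : ℕ) : 0 < lamSeq lam0 μ n := by
  induction n with
  | zero => exact h0
  | succ n ih => exact Nat.mul_pos ih (hμ n)

theorem suppBox_subset_suppBox {r R : ℕ} (h : ∀ i, |v i - u i| + r ≤ R) :
    suppBox v r ⊆ suppBox u R := fun x hx i => by
  have hi : |(v i : ℝ) - u i| + r ≤ R := by exact_mod_cast h i
  linarith [hx i, abs_sub_le (x i) (v i) (u i)]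

theorem disjoint_suppBox {r : ℕ} (h : 2 * r < normInfV (u - v)) :
    Disjoint (suppBox u r) (suppBox v r) := by
  refine Set.disjoint_left.2 fun x hu hv => h.not_ge (Finset.sup_le fun i _ => ?_)
  have huv : |(u i : ℝ) - v i| ≤ 2 * r := by
    linarith [hv i, hu i, abs_sub_le (u i : ℝ) (x i) (v i), abs_sub_comm (x i) (u i)]
  zify
  exact_mod_cast huv

theorem suppBox_subset_of_mem_lamBox (h : NestedSupports μ σ) (hv : v ∈ lamBox lam0 μ (n + 1) u) :
    suppBox v (σ n * lamSeq lam0 μ n) ⊆ suppBox u (σ (n + 1) * lamSeq lam0 μ (n + 1)) := by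
  refine suppBox_subset_suppBox fun i => ?_
  obtain ⟨hle, hlt⟩ := hv.2 i
  have hnest : σ n * lamSeq lam0 μ n + lamSeq lam0 μ (n + 1) ≤
      σ (n + 1) * lamSeq lam0 μ (n + 1) := by
    rw [lamSeq]
    nlinarith [Nat.mul_le_mul_left (lamSeq lam0 μ n) (h n).2]
  zify at hnest
  push_cast
  rw [abs_of_nonneg (by omega)]
  omega

theorem card_filter_dvd_Ico_add_mul {r : ℤ} (hr : 0 < r) (a : ℤ) (m : ℕ) :
    (Finset.filter (r ∣ ·) (Finset.Ico a (a + r * m))).card = m := by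
  have hr' : (r : ℚ) ≠ 0 := by exact_mod_cast hr.ne'
  have hdiv : ((a + r * m : ℤ) : ℚ) / r = a / r + (m : ℤ) := by push_cast; field_simp
  have := Int.Ico_filter_dvd_card a (a + r * m) hr
  rw [hdiv, Int.ceil_add_intCast] at this
  omega

theorem lamBox_succ_eq_coe_piFinset :
    lamBox lam0 μ (n + 1) u = Fintype.piFinset fun i =>
      Finset.filter ((lamSeq lam0 μ n : ℤ) ∣ ·)
        (Finset.Ico (u i) (u i + (lamSeq lam0 μ n : ℤ) * μ n)) := by
  ext v
  simp [lamBox, latt, lamSeq, forall_and, and_comm]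

theorem finite_lamBox_succ : (lamBox lam0 μ (n + 1) u).Finite := by
  rw [lamBox_succ_eq_coe_piFinset]
  exact Finset.finite_toSet _

theorem ncard_lamBox_succ (h : 0 < lamSeq lam0 μ n) :
    (lamBox lam0 μ (n + 1) u).ncard = μ n ^ d := by
  rw [lamBox_succ_eq_coe_piFinset, Set.ncard_coe_finset, Fintype.card_piFinset]
  simp [card_filter_dvd_Ico_add_mul (Int.natCast_pos.2 h)]

/-- The pairs of points of `Λ_{n+1}(u)` at sup-distance at least `5 σ_n λ_n`, over which the
intersection in the definition of `𝒜^{(n+1)}_u` runs. -/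
def distantPairs (lam0 : ℕ) (μ σ : ℕ → ℕ) (n : ℕ) (u : Fin d → ℤ) :
    Set ((Fin d → ℤ) × (Fin d → ℤ)) :=
  {p ∈ lamBox lam0 μ (n + 1) u ×ˢ lamBox lam0 μ (n + 1) u |
    5 * σ n * lamSeq lam0 μ n ≤ normInfV (p.1 - p.2)}

theorem finite_distantPairs : (distantPairs lam0 μ σ n u).Finite :=
  (finite_lamBox_succ.prod finite_lamBox_succ).subset (Set.sep_subset _ _)

theorem ncard_distantPairs_le (h : 0 < lamSeq lam0 μ n) :
    (distantPairs lam0 μ σ n u).ncard ≤ μ n ^ (2 * d) :=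
  calc (distantPairs lam0 μ σ n u).ncard
      ≤ (lamBox lam0 μ (n + 1) u ×ˢ lamBox lam0 μ (n + 1) u).ncard :=
        Set.ncard_le_ncard (Set.sep_subset _ _) (finite_lamBox_succ.prod finite_lamBox_succ)
    _ = μ n ^ (2 * d) := by rw [Set.ncard_prod, ncard_lamBox_succ h, two_mul, pow_add]

end Geometry

section RecursiveBound

open scoped ENNReal

theorem measure_biUnion_le_ncard_mul {α ι : Type*} [MeasurableSpace α] (P : Measure α) {s : Set ι}
    (hs : s.Finite) {t : ι → Set α} {b : ℝ≥0∞} (h : ∀ i ∈ s, P (t i) ≤ b) :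
    P (⋃ i ∈ s, t i) ≤ s.ncard * b := by
  obtain ⟨s, rfl⟩ := hs.exists_finset_coe
  calc P (⋃ i ∈ s, t i) ≤ ∑ i ∈ s, P (t i) := measure_biUnion_finset_le s t
    _ ≤ s.card • b := Finset.sum_le_card_nsmul s _ b h
    _ = (s : Set ι).ncard * b := by rw [Set.ncard_coe_finset, nsmul_eq_mul]

variable {Ω : Type*} {d lam0 n : ℕ} {μ σ : ℕ → ℕ} {S : RenormScheme Ω d} {u v : Fin d → ℤ}

theorem compl_Aev_succ :
    (Aev lam0 μ σ S (n + 1) u)ᶜ = (S.aux (n + 1) u)ᶜ ∪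
      ⋃ p ∈ distantPairs lam0 μ σ n u, (Aev lam0 μ σ S n p.1)ᶜ ∩ (Aev lam0 μ σ S n p.2)ᶜ := by
  ext ω
  simp only [Aev, distantPairs, mem_compl_iff, mem_inter_iff, mem_iInter, mem_union, mem_iUnion,
    mem_ofPred_eq, mem_prod, Prod.exists, exists_prop]
  grind

theorem measurableSet_Aev (h : NestedSupports μ σ) {D : Set (Fin d → ℝ)}
    (hu : u ∈ latt d (lamSeq lam0 μ n)) (hD : suppBox u (σ n * lamSeq lam0 μ n) ⊆ D) :
    MeasurableSet[MeasurableSpace.generateFrom (schemeEventsIn lam0 μ σ S D)]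
      (Aev lam0 μ σ S n u) := by
  let _ := MeasurableSpace.generateFrom (schemeEventsIn lam0 μ σ S D)
  induction n generalizing u with
  | zero => exact MeasurableSpace.measurableSet_generateFrom (.inl ⟨u, hu, rfl, hD⟩)
  | succ n ih =>
    have haux : MeasurableSet (S.aux (n + 1) u) :=
      MeasurableSpace.measurableSet_generateFrom (.inr ⟨n + 1, n.succ_pos, u, hu, rfl, hD⟩)
    have hbox : ∀ v ∈ lamBox lam0 μ (n + 1) u, MeasurableSet (Aev lam0 μ σ S n v) :=
      fun v hv => ih hv.1 ((suppBox_subset_of_mem_lamBox h hv).trans hD)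
    exact haux.inter <| .iInter fun u₁ => .iInter fun u₂ => .iInter fun h₁ => .iInter fun h₂ =>
      .iInter fun _ => (hbox u₁ h₁).union (hbox u₂ h₂)

variable [MeasureSpace Ω]

theorem measure_compl_Aev_inter_compl_Aev (h : NestedSupports μ σ) (hC2 : Cond2 lam0 μ σ S)
    (hu : u ∈ latt d (lamSeq lam0 μ n)) (hv : v ∈ latt d (lamSeq lam0 μ n))
    (huv : 2 * (σ n * lamSeq lam0 μ n) < normInfV (u - v)) :
    ℙ ((Aev lam0 μ σ S n u)ᶜ ∩ (Aev lam0 μ σ S n v)ᶜ) =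
      ℙ ((Aev lam0 μ σ S n u)ᶜ) * ℙ ((Aev lam0 μ σ S n v)ᶜ) :=
  (Indep_iff _ _ _).1 (hC2 _ _ (disjoint_suppBox huv)) _ _
    (measurableSet_Aev h hu subset_rfl).compl (measurableSet_Aev h hv subset_rfl).compl

theorem iSup_measure_compl_Aev_succ_le (h0 : 0 < lam0) (h : NestedSupports μ σ)
    (hC2 : Cond2 lam0 μ σ S) (n : ℕ) :
    ⨆ u ∈ latt d (lamSeq lam0 μ (n + 1)), ℙ ((Aev lam0 μ σ S (n + 1) u)ᶜ) ≤
      (⨆ u ∈ latt d (lamSeq lam0 μ (n + 1)), ℙ ((S.aux (n + 1) u)ᶜ)) +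
        (μ n : ℝ≥0∞) ^ (2 * d) *
          (⨆ u ∈ latt d (lamSeq lam0 μ n), ℙ ((Aev lam0 μ σ S n u)ᶜ)) ^ 2 := by
  set p : ℝ≥0∞ := ⨆ u ∈ latt d (lamSeq lam0 μ n), ℙ ((Aev lam0 μ σ S n u)ᶜ)
  have hp : ∀ u ∈ latt d (lamSeq lam0 μ n), ℙ ((Aev lam0 μ σ S n u)ᶜ) ≤ p :=
    le_iSup₂ (f := fun u _ => ℙ ((Aev lam0 μ σ S n u)ᶜ))
  have hlam : 0 < lamSeq lam0 μ n := lamSeq_pos h0 h.pos n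
  refine iSup₂_le fun u hu => ?_
  have hpair : ∀ q ∈ distantPairs lam0 μ σ n u,
      ℙ ((Aev lam0 μ σ S n q.1)ᶜ ∩ (Aev lam0 μ σ S n q.2)ᶜ) ≤ p ^ 2 := by
    rintro ⟨v, w⟩ ⟨⟨hv, hw⟩, hvw⟩
    have hfar : 2 * (σ n * lamSeq lam0 μ n) < normInfV (v - w) := by
      have := Nat.mul_pos (h n).1 hlam
      linarith
    rw [measure_compl_Aev_inter_compl_Aev (n := n) h hC2 hv.1 hw.1 hfar, sq]
    exact mul_le_mul' (hp v hv.1) (hp w hw.1)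
  rw [compl_Aev_succ]
  refine (measure_union_le _ _).trans (add_le_add ?_ ?_)
  · exact le_iSup₂ (f := fun u _ => ℙ ((S.aux (n + 1) u)ᶜ)) u hu
  · refine (measure_biUnion_le_ncard_mul ℙ finite_distantPairs hpair).trans ?_
    gcongr
    exact_mod_cast ncard_distantPairs_le hlam

end RecursiveBound

section QuadraticRecursion

open scoped NNReal ENNReal

variable {m : ℕ → ℝ≥0}

/-- The loss in the exponent `x` of a bound `2^(-2^k x)` at scale `k` when passing to scale `k + 1`
through a factor `2 * m k`. -/
def exponentLoss (m : ℕ → ℝ≥0) (k : ℕ) : ℝ := (1 + Real.logb 2 (m k)) / 2 ^ (k + 1)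

/-- The exponent `x_n` of the bound `2^(-2^n x_n)` propagated through the scales. It exceeds `1` by
the sum of all losses still to come, so that it stays above `1` at every scale. -/
def decayExponent (m : ℕ → ℝ≥0) (n : ℕ) : ℝ := 1 + ∑' k, exponentLoss m (k + n)

theorem exponentLoss_pos {k : ℕ} (hm : 1 ≤ m k) : 0 < exponentLoss m k := by
  have : 0 ≤ Real.logb 2 (m k) := Real.logb_nonneg one_lt_two (by exact_mod_cast hm)
  rw [exponentLoss]
  positivity

theorem summable_exponentLoss (h : Summable fun k => Real.logb 2 (m k) / 2 ^ k) :
    Summable (exponentLoss m) := by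
  refine ((summable_geometric_two.add h).mul_left (1 / 2)).congr fun k => ?_
  rw [exponentLoss, one_div_pow]
  field_simp
  ring

theorem one_lt_decayExponent (hm : ∀ k, 1 ≤ m k) (h : Summable (exponentLoss m)) (n : ℕ) :
    1 < decayExponent m n :=
  lt_add_of_pos_right 1 <| ((summable_nat_add_iff n).2 h).tsum_pos
    (fun k => (exponentLoss_pos (hm (k + n))).le) 0 (exponentLoss_pos (hm (0 + n)))

theorem decayExponent_eq_exponentLoss_add (h : Summable (exponentLoss m)) (n : ℕ) :
    decayExponent m n = exponentLoss m n + decayExponent m (n + 1) := by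
  simp only [decayExponent]
  rw [((summable_nat_add_iff n).2 h).tsum_eq_zero_add, zero_add]
  simp only [add_assoc, add_comm 1 n, add_left_comm]

theorem antitone_decayExponent (hm : ∀ k, 1 ≤ m k) (h : Summable (exponentLoss m)) :
    Antitone (decayExponent m) :=
  antitone_nat_of_succ_le fun n => by
    linarith [decayExponent_eq_exponentLoss_add h n, exponentLoss_pos (hm n)]

theorem mul_sq_two_rpow_decayExponent {n : ℕ} (hm : 0 < m n) (h : Summable (exponentLoss m)) :
    (m n : ℝ) * ((2 : ℝ) ^ (-(2 ^ n * decayExponent m n))) ^ 2 =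
      (2 : ℝ) ^ (-(2 ^ (n + 1) * decayExponent m (n + 1))) / 2 := by
  have hmn : (0 : ℝ) < m n := NNReal.coe_pos.2 hm
  have hloss : 2 ^ (n + 1) * exponentLoss m n = 1 + Real.logb 2 (m n) :=
    mul_div_cancel₀ _ (by positivity)
  have hexp : Real.logb 2 (m n) + -(2 ^ n * decayExponent m n) * (2 : ℕ) =
      -(2 ^ (n + 1) * decayExponent m (n + 1)) - 1 := by
    rw [decayExponent_eq_exponentLoss_add h n]
    push_cast
    linear_combination -hloss
  calc (m n : ℝ) * ((2 : ℝ) ^ (-(2 ^ n * decayExponent m n))) ^ 2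
      = (2 : ℝ) ^ Real.logb 2 (m n) * (2 : ℝ) ^ (-(2 ^ n * decayExponent m n) * (2 : ℕ)) := by
        rw [Real.rpow_logb two_pos (by norm_num) hmn, Real.rpow_mul_natCast zero_le_two]
    _ = (2 : ℝ) ^ (-(2 ^ (n + 1) * decayExponent m (n + 1)) - 1) := by
        rw [← Real.rpow_add two_pos, hexp]
    _ = (2 : ℝ) ^ (-(2 ^ (n + 1) * decayExponent m (n + 1))) / 2 := Real.rpow_sub_one two_ne_zero _

theorem two_rpow_neg_div_le (hm : ∀ k, 1 ≤ m k) (h : Summable (exponentLoss m)) (n : ℕ) :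
    (2 : ℝ) ^ (-(2 : ℝ) ^ n / (2 : ℝ) ^ (-decayExponent m 0)) ≤
      (2 : ℝ) ^ (-(2 ^ n * decayExponent m n)) / 2 := by
  have hbernoulli : 1 + decayExponent m 0 ≤ (2 : ℝ) ^ decayExponent m 0 := by
    simpa [one_add_one_eq_two] using one_add_mul_self_le_rpow_one_add (s := 1) (by norm_num)
      (one_lt_decayExponent hm h 0).le
  have hanti : decayExponent m n ≤ decayExponent m 0 := antitone_decayExponent hm h n.zero_le
  have hpow : (1 : ℝ) ≤ 2 ^ n := one_le_pow₀ one_le_two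
  rw [← Real.rpow_sub_one two_ne_zero, Real.rpow_neg zero_le_two, div_inv_eq_mul]
  refine Real.rpow_le_rpow_of_exponent_le one_le_two ?_
  nlinarith

theorem le_two_rpow_of_quadratic_recursion (hm : ∀ k, 1 ≤ m k) (h : Summable (exponentLoss m))
    {p q : ℕ → ℝ≥0∞} (hp : p 0 ≤ ENNReal.ofReal (2 ^ (-decayExponent m 0)))
    (hq : ∀ n, q (n + 1) ≤ ENNReal.ofReal (2 ^ (-(2 ^ (n + 1) * decayExponent m (n + 1))) / 2))
    (hrec : ∀ n, p (n + 1) ≤ q (n + 1) + m n * p n ^ 2) (n : ℕ) :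
    p n ≤ ENNReal.ofReal (2 ^ (-(2 ^ n * decayExponent m n))) := by
  induction n with
  | zero => simpa only [pow_zero, one_mul] using hp
  | succ n ih =>
    have hsq : m n * p n ^ 2 ≤
        ENNReal.ofReal (2 ^ (-(2 ^ (n + 1) * decayExponent m (n + 1))) / 2) := by
      rw [← mul_sq_two_rpow_decayExponent (one_pos.trans_le (hm n)) h,
        ENNReal.ofReal_mul (m n).coe_nonneg, ENNReal.ofReal_pow (by positivity),
        ENNReal.ofReal_coe_nnreal]
      gcongr
    calc p (n + 1) ≤ q (n + 1) + m n * p n ^ 2 := hrec n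
      _ ≤ _ := add_le_add (hq n) hsq
      _ = _ := by rw [← ENNReal.ofReal_add (by positivity) (by positivity), add_halves]

theorem exists_threshold_of_quadratic_recursion (hm : ∀ k, 1 ≤ m k)
    (hsum : Summable fun k => Real.logb 2 (m k) / 2 ^ k) :
    ∃ ε : ℝ, 0 < ε ∧ ∀ p q : ℕ → ℝ≥0∞, p 0 < ENNReal.ofReal ε →
      (∀ n, 1 ≤ n → q n < ENNReal.ofReal ((2 : ℝ) ^ (-((2 : ℝ) ^ n) / ε))) →
      (∀ n, p (n + 1) ≤ q (n + 1) + m n * p n ^ 2) →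
      ∀ n, p n < ENNReal.ofReal ((2 : ℝ) ^ (-((2 : ℝ) ^ n))) := by
  have h := summable_exponentLoss hsum
  refine ⟨2 ^ (-decayExponent m 0), by positivity, fun p q hp hq hrec n => ?_⟩
  have hq' (n) : q (n + 1) ≤
      ENNReal.ofReal (2 ^ (-(2 ^ (n + 1) * decayExponent m (n + 1))) / 2) :=
    (hq (n + 1) n.succ_pos).le.trans (ENNReal.ofReal_le_ofReal (two_rpow_neg_div_le hm h (n + 1)))
  refine (le_two_rpow_of_quadratic_recursion hm h hp.le hq' hrec n).trans_lt ?_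
  rw [ENNReal.ofReal_lt_ofReal_iff (by positivity)]
  refine Real.rpow_lt_rpow_of_exponent_lt one_lt_two (neg_lt_neg ?_)
  exact lt_mul_of_one_lt_right (by positivity) (one_lt_decayExponent hm h n)

end QuadraticRecursion

theorem stmt14_general (d : ℕ) (μ σ : ℕ → ℕ) (h : NestedSupports μ σ)
    (hC3 : Summable fun n : ℕ => Real.logb 2 (μ n) / 2 ^ n) :
    ∃ ε₀ : ℝ, 0 < ε₀ ∧
      ∀ (Ω : Type*) [MeasureSpace Ω] (lam0 : ℕ), 0 < lam0 →
        ∀ S : RenormScheme Ω d, Cond2 lam0 μ σ S →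
        ((⨆ u ∈ latt d (lamSeq lam0 μ 0), ℙ ((S.seed u)ᶜ)) < ENNReal.ofReal ε₀) →
        (∀ n : ℕ, 1 ≤ n → (⨆ u ∈ latt d (lamSeq lam0 μ n), ℙ ((S.aux n u)ᶜ)) <
          ENNReal.ofReal ((2 : ℝ) ^ (-((2 : ℝ) ^ n) / ε₀))) →
        ∀ n : ℕ, (⨆ u ∈ latt d (lamSeq lam0 μ n), ℙ ((Aev lam0 μ σ S n u)ᶜ)) <
          ENNReal.ofReal ((2 : ℝ) ^ (-((2 : ℝ) ^ n))) := by
  have hm (n) : 1 ≤ (μ n : NNReal) ^ (2 * d) := one_le_pow₀ (Nat.one_le_cast.2 (h.pos n))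
  have hsum : Summable fun n => Real.logb 2 ((μ n : NNReal) ^ (2 * d) : NNReal) / 2 ^ n :=
    (hC3.mul_left (2 * d : ℝ)).congr fun n => by simp [Real.logb_pow, mul_div_assoc]
  obtain ⟨ε₀, hε₀, hdecay⟩ := exists_threshold_of_quadratic_recursion hm hsum
  refine ⟨ε₀, hε₀, fun Ω _ lam0 h0 S hC2 hseed haux => hdecay _ _ hseed haux fun n => ?_⟩
  simpa using iSup_measure_compl_Aev_succ_le h0 h hC2 n

theorem stmt14 (d : ℕ) (hd : 2 ≤ d) (μ σ : ℕ → ℕ)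
    (hμ : ∀ n, 0 < μ n) (hσ : ∀ n, 0 < σ n)
    (hC1 : Cond1 μ σ)
    (hC3 : Summable fun n : ℕ => Real.logb 2 (μ n) / 2 ^ n) :
    ∃ ε₀ : ℝ, 0 < ε₀ ∧
      ∀ (Ω : Type) [MeasureSpace Ω] [IsProbabilityMeasure (ℙ : Measure Ω)]
        (lam0 : ℕ), 0 < lam0 → ∀ S : RenormScheme Ω d, Cond2 lam0 μ σ S →
        ((⨆ u ∈ latt d (lamSeq lam0 μ 0), ℙ ((S.seed u)ᶜ)) < ENNReal.ofReal ε₀) →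
        (∀ n : ℕ, 1 ≤ n → (⨆ u ∈ latt d (lamSeq lam0 μ n), ℙ ((S.aux n u)ᶜ)) <
          ENNReal.ofReal ((2 : ℝ) ^ (-((2 : ℝ) ^ n) / ε₀))) →
        ∀ n : ℕ, (⨆ u ∈ latt d (lamSeq lam0 μ n), ℙ ((Aev lam0 μ σ S n u)ᶜ)) <
          ENNReal.ofReal ((2 : ℝ) ^ (-((2 : ℝ) ^ n))) := by
  obtain ⟨ε₀, hε₀, h⟩ := stmt14_general d μ σ hC1.nestedSupports hC3
  exact ⟨ε₀, hε₀, fun Ω _ _ => h Ω⟩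

end
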